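/- Let Y be a real random variable such that |Y| is regularly varying with index α>0, and let G be a random vector in ℝ^d, independent of Y, with E|G|^{α+ε}<∞ for some ε>0 and E|G|^α>0. Then lim_{x→∞} P(|G||Y|>x)/P(|Y|>x) = E|G|^α; in particular |G·Y| is regularly varying with index α, and if (a_n) satisfies n·P(|Y|>a_n)→1 then there is a constant c>0 with n·P(|G·Y|>c·a_n)→1. -/

import Mathlib

/-!
The first claim is Breiman's lemma. Write `F x = P(|Y| > x)`. By independence,
`P(|G||Y| > x) / F x = E[h_x(|G|)]` with `h_x(g) = P(g|Y| > x) / F x`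
(`tail_mul_eq_integral`). Regular variation gives `h_x(g) → g ^ α` pointwise, and a
Potter-type bound `h_x(g) ≤ 1 + C g ^ (α + ε)`, uniform in large `x` (`potter_bound`), allows
dominated convergence. The Potter bound comes from iterating the doubling estimate
`F (x / 2) ≤ 2 ^ (α + ε) F x`, valid for large `x` (`potter_pow`).

The remaining claims follow by multiplying limits of ratios. With `q x = P(|G||Y| > x)` and
`m = E|G| ^ α`, one has `q (t x) / q x = (q (t x) / F (t x)) (F (t x) / F x) / (q x / F x)`.
For the last claim, `n F (a n) → 1` forces `a n → ∞`, and `c = m ^ (1 / α)` is the constant.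
-/

open MeasureTheory ProbabilityTheory Filter
open scoped ProbabilityTheory

/-- A nonnegative random variable `R` is regularly varying with index `α > 0`:
`P(R > x) > 0` for all `x`, and `P(R > t x)/P(R > x) → t^{-α}` as `x → ∞`. -/
def IsRegVarTail {Ω : Type*} [MeasureSpace Ω] (α : ℝ) (R : Ω → ℝ) : Prop :=
  (∀ x : ℝ, 0 < (ℙ : Measure Ω) {ω | R ω > x}) ∧
  (∀ t : ℝ, 0 < t →
    Tendsto (fun x : ℝ =>
      ((ℙ : Measure Ω) {ω | R ω > t * x}).toReal / ((ℙ : Measure Ω) {ω | R ω > x}).toReal)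
      atTop (nhds (t ^ (-α))))

/-- Iterated doubling estimate. Once the halved argument drops below `x₀`, the trivial bound
`F ≤ 1 ≤ C F x` takes over, with `C = 1 / F (2 x₀)`. -/
lemma potter_pow {F : ℝ → ℝ} (hF : Antitone F) (hpos : ∀ x, 0 < F x) (hle : ∀ x, F x ≤ 1)
    {x₀ K : ℝ} (hK : 1 ≤ K) (hd : ∀ x, x₀ ≤ x → F (x / 2) ≤ K * F x) (n : ℕ) :
    ∀ x, x₀ ≤ x → F (x / 2 ^ n) ≤ (F (2 * x₀))⁻¹ * K ^ n * F x := by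
  have hC : 1 ≤ (F (2 * x₀))⁻¹ := (one_le_inv₀ (hpos _)).2 (hle _)
  induction n with
  | zero =>
    intro x _
    simpa using le_mul_of_one_le_left (hpos x).le hC
  | succ n ih =>
    intro x hx
    by_cases h : x₀ ≤ x / 2
    · have h1 := ih _ h
      have h2 := hd _ hx
      have hc : 0 ≤ (F (2 * x₀))⁻¹ * K ^ n := by
        have := (hpos (2 * x₀)).le
        positivity
      calc F (x / 2 ^ (n + 1)) = F (x / 2 / 2 ^ n) := by
            rw [div_div, pow_succ']
        _ ≤ (F (2 * x₀))⁻¹ * K ^ n * F (x / 2) := h1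
        _ ≤ (F (2 * x₀))⁻¹ * K ^ n * (K * F x) := mul_le_mul_of_nonneg_left h2 hc
        _ = _ := by ring
    · have h3 : F (2 * x₀) ≤ F x := hF (by linarith)
      have h4 : 1 ≤ (F (2 * x₀))⁻¹ * F x := by
        rw [inv_mul_eq_div, one_le_div (hpos _)]
        exact h3
      have h5 : 1 ≤ K ^ (n + 1) := one_le_pow₀ hK
      calc F (x / 2 ^ (n + 1)) ≤ 1 := hle _
        _ ≤ K ^ (n + 1) * ((F (2 * x₀))⁻¹ * F x) := one_le_mul_of_one_le_of_one_le h5 h4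
        _ = _ := by ring

/-- Potter-type bound for a tail function `F` of regular variation index `-α`, `α < β`. -/
lemma potter_bound {F : ℝ → ℝ} (hF : Antitone F) (hpos : ∀ x, 0 < F x) (hle : ∀ x, F x ≤ 1)
    {α β : ℝ} (hα : 0 < α) (hαβ : α < β)
    (hreg : Tendsto (fun x => F ((1 / 2) * x) / F x) atTop (nhds ((1 / 2 : ℝ) ^ (-α)))) :
    ∃ C : ℝ, ∀ᶠ x in atTop, ∀ g : ℝ, 0 < g → F (x / g) / F x ≤ 1 + C * g ^ β := by
  have hlt : (1 / 2 : ℝ) ^ (-α) < 2 ^ β := by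
    rw [one_div, Real.inv_rpow (by norm_num), Real.rpow_neg (by norm_num), inv_inv]
    exact Real.rpow_lt_rpow_of_exponent_lt (by norm_num) hαβ
  obtain ⟨x₀, h⟩ := eventually_atTop.1 (hreg.eventually_lt_const hlt)
  have hK : (1 : ℝ) ≤ 2 ^ β := Real.one_le_rpow (by norm_num) (by linarith)
  have key := potter_pow hF hpos hle hK (x₀ := x₀) (fun x hx => by
    have := (h x hx).le
    rw [div_le_iff₀ (hpos x)] at this
    rwa [div_eq_inv_mul, ← one_div])
  have hC := hpos (2 * x₀)
  refine ⟨(F (2 * x₀))⁻¹ * 2 ^ β, ?_⟩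
  filter_upwards [eventually_ge_atTop x₀, eventually_ge_atTop 0] with x hx hx0 g hg
  have hgβ : 0 < g ^ β := Real.rpow_pos_of_pos hg β
  rcases le_total g 1 with hg1 | hg1
  · have : F (x / g) / F x ≤ 1 := by
      rw [div_le_one (hpos x)]
      apply hF
      rw [le_div_iff₀ hg]
      exact mul_le_of_le_one_right hx0 hg1
    have h2 : 0 ≤ (F (2 * x₀))⁻¹ * 2 ^ β * g ^ β := by positivity
    linarith
  · obtain ⟨n, hn1, hn2⟩ := exists_nat_pow_near hg1 (by norm_num : (1 : ℝ) < 2)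
    have h1 : F (x / g) ≤ F (x / 2 ^ (n + 1)) := hF (by gcongr)
    have h2 := key (n + 1) x hx
    have h3 : ((2 : ℝ) ^ β) ^ n ≤ g ^ β := by
      rw [← Real.rpow_natCast, ← Real.rpow_mul (by norm_num), mul_comm,
        Real.rpow_mul (by norm_num), Real.rpow_natCast]
      exact Real.rpow_le_rpow (by positivity) hn1 (by linarith)
    have h4 : F (x / g) / F x ≤ (F (2 * x₀))⁻¹ * (2 ^ β) ^ (n + 1) := by
      rw [div_le_iff₀ (hpos x)]
      exact h1.trans h2
    have h5 : (F (2 * x₀))⁻¹ * ((2 : ℝ) ^ β) ^ (n + 1) ≤ (F (2 * x₀))⁻¹ * 2 ^ β * g ^ β := by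
      rw [pow_succ', ← mul_assoc]
      gcongr
    linarith

section Tails

variable {Ω : Type*} [MeasureSpace Ω] [IsProbabilityMeasure (ℙ : Measure Ω)]

lemma tail_measurable {W : Ω → ℝ} (hW : Measurable W) (x : ℝ) :
    Measurable fun g : ℝ => ((ℙ : Measure Ω) {ω | g * W ω > x}).toReal := by
  have hs : MeasurableSet {p : ℝ × Ω | p.1 * W p.2 > x} :=
    measurableSet_lt measurable_const (measurable_fst.mul (hW.comp measurable_snd))
  exact (measurable_measure_prodMk_left (ν := (ℙ : Measure Ω)) hs).ennreal_toReal

/-- Conditioning on `Z` in the tail of a product of independent variables. -/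
lemma tail_mul_eq_integral {Z W : Ω → ℝ} (hZ : Measurable Z) (hW : Measurable W)
    (hi : IndepFun Z W) (x : ℝ) :
    ((ℙ : Measure Ω) {ω | Z ω * W ω > x}).toReal
      = ∫ ω, ((ℙ : Measure Ω) {ω' | Z ω * W ω' > x}).toReal := by
  have hs : MeasurableSet {p : ℝ × ℝ | p.1 * p.2 > x} :=
    measurableSet_lt measurable_const (measurable_fst.mul measurable_snd)
  have hmap := (indepFun_iff_map_prod_eq_prod_map_map hZ.aemeasurable hW.aemeasurable).1 hi
  have : IsProbabilityMeasure (Measure.map W ℙ) := Measure.isProbabilityMeasure_map hW.aemeasurable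
  have h1 : (ℙ : Measure Ω) {ω | Z ω * W ω > x}
      = ∫⁻ ω, (ℙ : Measure Ω) {ω' | Z ω * W ω' > x} := by
    have h2 : (ℙ : Measure Ω) {ω | Z ω * W ω > x}
        = Measure.map (fun ω => (Z ω, W ω)) ℙ {p : ℝ × ℝ | p.1 * p.2 > x} := by
      rw [Measure.map_apply (hZ.prodMk hW) hs]
      rfl
    rw [h2, hmap, Measure.prod_apply hs,
      lintegral_map (measurable_measure_prodMk_left hs) hZ]
    refine lintegral_congr fun ω => ?_
    rw [Measure.map_apply hW (measurable_prodMk_left hs)]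
    rfl
  have h3 := integral_toReal (μ := (ℙ : Measure Ω))
    (f := fun ω => (ℙ : Measure Ω) {ω' | Z ω * W ω' > x}) ?_ ?_
  · rw [h3, h1]
  · have hs' : MeasurableSet {p : ℝ × Ω | p.1 * W p.2 > x} :=
      measurableSet_lt measurable_const (measurable_fst.mul (hW.comp measurable_snd))
    exact ((measurable_measure_prodMk_left (ν := (ℙ : Measure Ω)) hs').comp hZ).aemeasurable
  · exact ae_of_all _ fun ω => measure_lt_top _ _

lemma tail_antitone (W : Ω → ℝ) :
    Antitone fun x : ℝ => ((ℙ : Measure Ω) {ω | W ω > x}).toReal := fun _ _ hxy =>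
  ENNReal.toReal_mono (measure_ne_top _ _) (measure_mono fun _ h => lt_of_le_of_lt hxy h)

lemma tail_pos {α : ℝ} {W : Ω → ℝ} (hreg : IsRegVarTail α W) (x : ℝ) :
    0 < ((ℙ : Measure Ω) {ω | W ω > x}).toReal :=
  ENNReal.toReal_pos (hreg.1 x).ne' (measure_ne_top _ _)

/-- Breiman's lemma for a product `Z * W` of independent real variables with `Z ≥ 0`; the sign of
`W` is irrelevant, as only its right tail enters. -/
lemma breiman {α ε : ℝ} (hα : 0 < α) (hε : 0 < ε) {Z W : Ω → ℝ} (hZ : Measurable Z)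
    (hW : Measurable W) (hZ0 : ∀ ω, 0 ≤ Z ω) (hi : IndepFun Z W) (hreg : IsRegVarTail α W)
    (hmom : Integrable (fun ω => Z ω ^ (α + ε))) :
    Tendsto (fun x : ℝ => ((ℙ : Measure Ω) {ω | Z ω * W ω > x}).toReal /
        ((ℙ : Measure Ω) {ω | W ω > x}).toReal) atTop (nhds (∫ ω, Z ω ^ α)) := by
  have hpos := tail_pos hreg
  obtain ⟨C, hC⟩ := potter_bound (tail_antitone W) hpos
    (fun x => ENNReal.toReal_le_of_le_ofReal zero_le_one (by simpa using prob_le_one))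
    hα (by linarith : α < α + ε) (hreg.2 (1 / 2) (by norm_num))
  have hset : ∀ g : ℝ, 0 < g → ∀ x, {ω | g * W ω > x} = {ω | W ω > x / g} := by
    intro g hg x
    ext ω
    simp only [Set.mem_ofPred_eq, gt_iff_lt, div_lt_iff₀' hg]
  -- When `Z = 0` the event is empty for `x ≥ 0`, so both sides of the limit vanish.
  have hset0 : ∀ x : ℝ, 0 ≤ x → {ω | 0 * W ω > x} = ∅ := by
    intro x hx
    ext ω
    simpa using hx
  simp_rw [tail_mul_eq_integral hZ hW hi, ← integral_div]
  refine tendsto_integral_filter_of_dominated_convergence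
    (fun ω => 1 + |C| * Z ω ^ (α + ε)) ?_ ?_ ?_ ?_
  · exact Eventually.of_forall fun x =>
      (((tail_measurable hW x).comp hZ).div_const _).aestronglyMeasurable
  · filter_upwards [hC, eventually_ge_atTop 0] with x hx hx0
    refine ae_of_all _ fun ω => ?_
    have hz := Real.rpow_nonneg (hZ0 ω) (α + ε)
    rw [Real.norm_of_nonneg (by positivity)]
    rcases (hZ0 ω).eq_or_lt with h | h
    · rw [← h, hset0 x hx0]
      simp only [measure_empty, ENNReal.toReal_zero, zero_div]
      rw [← h] at hz
      positivity
    · rw [hset _ h]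
      refine (hx _ h).trans ?_
      gcongr
      exact le_abs_self C
  · exact (integrable_const _).add (hmom.const_mul _)
  · refine ae_of_all _ fun ω => ?_
    rcases (hZ0 ω).eq_or_lt with h | h
    · rw [← h, Real.zero_rpow hα.ne']
      refine tendsto_const_nhds.congr' ?_
      filter_upwards [eventually_ge_atTop 0] with x hx
      rw [hset0 x hx]
      simp
    · have h1 := hreg.2 (Z ω)⁻¹ (inv_pos.2 h)
      rw [Real.inv_rpow h.le, Real.rpow_neg h.le, inv_inv] at h1
      refine h1.congr fun x => ?_
      rw [hset _ h, div_eq_inv_mul x]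

/-- Tail equivalence `P(V > x) ~ m P(W > x)` transfers regular variation. -/
lemma regVar_of_equiv {α m : ℝ} (hm : 0 < m) {V W : Ω → ℝ} (hreg : IsRegVarTail α W)
    (hlim : Tendsto (fun x : ℝ => ((ℙ : Measure Ω) {ω | V ω > x}).toReal /
        ((ℙ : Measure Ω) {ω | W ω > x}).toReal) atTop (nhds m)) :
    IsRegVarTail α V := by
  have hpos := tail_pos hreg
  have hV : ∀ x : ℝ, 0 < ((ℙ : Measure Ω) {ω | V ω > x}).toReal := by
    intro x
    obtain ⟨y, hy, hxy⟩ := ((hlim.eventually_const_lt hm).and (eventually_ge_atTop x)).exists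
    exact ((div_pos_iff_of_pos_right (hpos y)).1 hy).trans_le (tail_antitone V hxy)
  refine ⟨fun x => (ENNReal.toReal_pos_iff.1 (hV x)).1, fun t ht => ?_⟩
  have h1 := hlim.comp (tendsto_id.const_mul_atTop ht)
  have h2 := (h1.mul (hreg.2 t ht)).div hlim hm.ne'
  rw [mul_div_cancel_left₀ _ hm.ne'] at h2
  refine h2.congr fun x => ?_
  have := (hpos x).ne'
  have := (hpos (t * x)).ne'
  have := (hV x).ne'
  simp only [Function.comp, id, Pi.div_apply]
  field_simp

/-- Normalizing sequences rescale by `m ^ (1 / α)` under tail equivalence. -/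
lemma norming_of_equiv {α m : ℝ} (hα : 0 < α) (hm : 0 < m) {V W : Ω → ℝ}
    (hreg : IsRegVarTail α W)
    (hlim : Tendsto (fun x : ℝ => ((ℙ : Measure Ω) {ω | V ω > x}).toReal /
        ((ℙ : Measure Ω) {ω | W ω > x}).toReal) atTop (nhds m)) (a : ℕ → ℝ)
    (ha : Tendsto (fun n : ℕ => (n : ℝ) * ((ℙ : Measure Ω) {ω | W ω > a n}).toReal)
        atTop (nhds 1)) :
    ∃ c > (0 : ℝ),
      Tendsto (fun n : ℕ => (n : ℝ) * ((ℙ : Measure Ω) {ω | V ω > c * a n}).toReal)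
        atTop (nhds 1) := by
  have hpos := tail_pos hreg
  have htop : Tendsto a atTop atTop := by
    have h0 : Tendsto (fun n : ℕ => ((ℙ : Measure Ω) {ω | W ω > a n}).toReal)
        atTop (nhds 0) := by
      have h := ha.mul (tendsto_inv_atTop_nhds_zero_nat (𝕜 := ℝ))
      rw [mul_zero] at h
      refine h.congr' ?_
      filter_upwards [eventually_gt_atTop 0] with n hn
      have : (n : ℝ) ≠ 0 := by positivity
      field_simp
    refine tendsto_atTop.2 fun M => ?_
    filter_upwards [h0.eventually_lt_const (hpos M)] with n hn
    by_contra! hlt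
    exact absurd (tail_antitone W hlt.le) (not_le.2 hn)
  have hc : 0 < m ^ (1 / α) := Real.rpow_pos_of_pos hm _
  refine ⟨m ^ (1 / α), hc, ?_⟩
  have h1 := hlim.comp (htop.const_mul_atTop hc)
  have h2 := (hreg.2 _ hc).comp htop
  have h3 := (ha.mul h2).mul h1
  have hval : (1 : ℝ) * (m ^ (1 / α)) ^ (-α) * m = 1 := by
    rw [← Real.rpow_mul hm.le, show 1 / α * -α = -1 by field_simp, Real.rpow_neg_one, one_mul,
      inv_mul_cancel₀ hm.ne']
  rw [hval] at h3
  refine h3.congr fun n => ?_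
  simp only [Function.comp]
  rw [mul_assoc (n : ℝ), mul_div_cancel₀ _ (hpos (a n)).ne', mul_assoc,
    mul_div_cancel₀ _ (hpos (m ^ (1 / α) * a n)).ne']

end Tails

/-- Breiman's lemma: if `|Y|` is regularly varying with index `α` and `G` is
an independent random vector with `E|G|^{α+ε} < ∞` and `E|G|^α > 0`, then
`P(|G||Y| > x)/P(|Y| > x) → E|G|^α`; in particular `|G⬝Y|` is regularly varying with index
`α`, and if `n·P(|Y| > a_n) → 1` then `n·P(|G⬝Y| > c·a_n) → 1` for some `c > 0`. -/
theorem stmt_9 {Ω : Type*} [MeasureSpace Ω] [IsProbabilityMeasure (ℙ : Measure Ω)]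
    (d : ℕ) (α : ℝ) (hα : 0 < α)
    (Y : Ω → ℝ) (G : Ω → EuclideanSpace ℝ (Fin d))
    (hYm : Measurable Y) (hGm : Measurable G)
    (hindep : IndepFun G Y)
    (hreg : IsRegVarTail α (fun ω => |Y ω|))
    (ε : ℝ) (hε : 0 < ε)
    (hmom : Integrable (fun ω => ‖G ω‖ ^ (α + ε)))
    (hpos : 0 < ∫ ω, ‖G ω‖ ^ α) :
    Tendsto (fun x : ℝ =>
        ((ℙ : Measure Ω) {ω | ‖G ω‖ * |Y ω| > x}).toReal /
          ((ℙ : Measure Ω) {ω | |Y ω| > x}).toReal)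
      atTop (nhds (∫ ω, ‖G ω‖ ^ α)) ∧
    IsRegVarTail α (fun ω => ‖Y ω • G ω‖) ∧
    (∀ a : ℕ → ℝ,
      Tendsto (fun n : ℕ => (n : ℝ) * ((ℙ : Measure Ω) {ω | |Y ω| > a n}).toReal)
        atTop (nhds 1) →
      ∃ c > (0 : ℝ),
        Tendsto (fun n : ℕ => (n : ℝ) * ((ℙ : Measure Ω) {ω | ‖Y ω • G ω‖ > c * a n}).toReal)
          atTop (nhds 1)) := by
  have hlim := breiman hα hε hGm.norm hYm.abs (fun ω => norm_nonneg (G ω))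
    (hindep.comp measurable_norm measurable_norm) hreg hmom
  have heq : (fun ω => ‖Y ω • G ω‖) = fun ω => ‖G ω‖ * |Y ω| := by
    funext ω
    rw [norm_smul, Real.norm_eq_abs, mul_comm]
  refine ⟨hlim, ?_, fun a ha => ?_⟩
  · rw [heq]
    exact regVar_of_equiv hpos hreg hlim
  · obtain ⟨c, hc, h⟩ := norming_of_equiv hα hpos hreg hlim a ha
    refine ⟨c, hc, ?_⟩
    simpa only [norm_smul, Real.norm_eq_abs, mul_comm ‖G _‖] using h
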